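/- arXiv:dg-ga/9505007 — 7 statements merged into one kernel-verified Lean document; each statement's English description precedes it below -/
import Mathlib

section
/- Let Γ be a nontrivial finite group and ρ: Γ → O(n+1) a fixed point free orthogonal representation. Then the spherical space form S^n/ρ(Γ) has radius at least π/2 if and only if every orbit of ρ(Γ) on S^n is contained in a proper ρ(Γ)-invariant linear subspace of ℝ^{n+1} (i.e., a proper invariant totally geodesic subsphere). Moreover, when this holds the radius equals exactly π/2. Concretely: (for every unit vector u ∈ ℝ^{n+1} there exists a unit vector v with ⟨ρ(g)u, v⟩ ≤ 0 for all g ∈ Γ) if and only if (for every unit vector u, the linear span of the orbit {ρ(g)u : g ∈ Γ} is a proper subspace of ℝ^{n+1}). -/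
open scoped RealInnerProductSpace

/-- The radius of the spherical space form `Sⁿ/ρ(Γ)`:
`rad = min over orbits Γu of max over orbits Γv of dist(Γu,Γv)`, where
`dist(Γu,Γv) = min_{g∈Γ} arccos ⟪ρ(g)u, v⟫`.  Orbits are parametrized by
unit vectors (the quantities involved depend only on the orbits). -/
noncomputable def sphereQuotRadius {Γ : Type*} [Group Γ] [Fintype Γ]
    {E : Type*} [NormedAddCommGroup E] [InnerProductSpace ℝ E]
    (ρ : Γ →* (E ≃ₗᵢ[ℝ] E)) : ℝ :=
  ⨅ u : {x : E // ‖x‖ = 1}, ⨆ v : {x : E // ‖x‖ = 1}, ⨅ g : Γ,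
    Real.arccos ⟪ρ g u.1, v.1⟫

theorem orbit_sum_eq_zero {E : Type*} [NormedAddCommGroup E] [InnerProductSpace ℝ E]
    {Γ : Type*} [Group Γ] [Fintype Γ] [Nontrivial Γ] (ρ : Γ →* (E ≃ₗᵢ[ℝ] E))
    (hfree : ∀ g : Γ, g ≠ 1 → ∀ x : E, x ≠ 0 → ρ g x ≠ x) (u : E) :
    ∑ g : Γ, ρ g u = 0 := by
  by_contra h
  obtain ⟨k, hk⟩ := exists_ne (1 : Γ)
  apply hfree k hk _ h
  rw [map_sum]
  refine Fintype.sum_equiv (Equiv.mulLeft k) _ _ ?_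
  intro g
  simp [map_mul]

theorem orbit_inner_sum {E : Type*} [NormedAddCommGroup E] [InnerProductSpace ℝ E]
    {Γ : Type*} [Group Γ] [Fintype Γ] [Nontrivial Γ] (ρ : Γ →* (E ≃ₗᵢ[ℝ] E))
    (hfree : ∀ g : Γ, g ≠ 1 → ∀ x : E, x ≠ 0 → ρ g x ≠ x) (u v : E) :
    ∑ g : Γ, ⟪ρ g u, v⟫ = 0 := by
  rw [← sum_inner, orbit_sum_eq_zero ρ hfree, inner_zero_left]

theorem exists_unit_orthogonal {E : Type*} [NormedAddCommGroup E] [InnerProductSpace ℝ E]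
    [FiniteDimensional ℝ E] {Γ : Type*} (f : Γ → E)
    (h : Submodule.span ℝ (Set.range f) ≠ ⊤) :
    ∃ v : E, ‖v‖ = 1 ∧ ∀ g : Γ, ⟪f g, v⟫ = 0 := by
  have h1 : (Submodule.span ℝ (Set.range f))ᗮ ≠ ⊥ := by
    intro h2
    exact h (Submodule.orthogonal_eq_bot_iff.mp h2)
  obtain ⟨w, hw, hw0⟩ := Submodule.exists_mem_ne_zero_of_ne_bot h1
  refine ⟨(‖w‖⁻¹ : ℝ) • w, ?_, ?_⟩
  · rw [norm_smul, norm_inv, norm_norm]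
    exact inv_mul_cancel₀ (norm_ne_zero_iff.mpr hw0)
  · intro g
    rw [inner_smul_right, (Submodule.mem_orthogonal _ _).mp hw (f g)
      (Submodule.subset_span ⟨g, rfl⟩), mul_zero]

/-- For a nontrivial finite group `Γ` with a fixed point free orthogonal representation
`ρ : Γ → O(n+1)`, the space form `Sⁿ/ρ(Γ)` has radius `≥ π/2` (concretely: for every
unit vector `u` there is a unit vector `v` with `⟪ρ(g)u, v⟫ ≤ 0` for all `g`) if and
only if every orbit spans a proper (automatically invariant) subspace of `ℝ^{n+1}`;
moreover in that case the radius is exactly `π/2`. -/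
theorem radius_ge_half_pi_iff_orbits_in_proper_invariant_subspace
    {n : ℕ} {Γ : Type*} [Group Γ] [Fintype Γ] [Nontrivial Γ]
    (ρ : Γ →* (EuclideanSpace ℝ (Fin (n + 1)) ≃ₗᵢ[ℝ] EuclideanSpace ℝ (Fin (n + 1))))
    (hfree : ∀ g : Γ, g ≠ 1 → ∀ x : EuclideanSpace ℝ (Fin (n + 1)), x ≠ 0 → ρ g x ≠ x) :
    ((∀ u : EuclideanSpace ℝ (Fin (n + 1)), ‖u‖ = 1 →
        ∃ v : EuclideanSpace ℝ (Fin (n + 1)), ‖v‖ = 1 ∧ ∀ g : Γ, ⟪ρ g u, v⟫ ≤ 0) ↔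
      (∀ u : EuclideanSpace ℝ (Fin (n + 1)), ‖u‖ = 1 →
        Submodule.span ℝ (Set.range fun g : Γ => ρ g u) ≠ ⊤)) ∧
    ((∀ u : EuclideanSpace ℝ (Fin (n + 1)), ‖u‖ = 1 →
        Submodule.span ℝ (Set.range fun g : Γ => ρ g u) ≠ ⊤) →
      sphereQuotRadius ρ = Real.pi / 2) := by
  refine ⟨⟨?_, ?_⟩, ?_⟩
  · intro h u hu htop
    obtain ⟨v, hv, hle⟩ := h u hu
    have hz : ∀ g : Γ, ⟪ρ g u, v⟫ = 0 := by
      have := (Finset.sum_eq_zero_iff_of_nonpos (s := Finset.univ)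
        (f := fun g : Γ => ⟪ρ g u, v⟫) (fun g _ => hle g)).mp (orbit_inner_sum ρ hfree u v)
      exact fun g => this g (Finset.mem_univ g)
    have hmem : v ∈ (Submodule.span ℝ (Set.range fun g : Γ => ρ g u))ᗮ := by
      rw [Submodule.mem_orthogonal]
      intro x hx
      induction hx using Submodule.span_induction with
      | mem x hx => obtain ⟨g, rfl⟩ := hx; exact hz g
      | zero => exact inner_zero_left _
      | add x y _ _ hx hy => rw [inner_add_left, hx, hy, add_zero]
      | smul a x _ hx => rw [inner_smul_left, hx, mul_zero]
    rw [htop, Submodule.top_orthogonal_eq_bot, Submodule.mem_bot] at hmem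
    rw [hmem, norm_zero] at hv
    exact zero_ne_one hv
  · intro h u hu
    obtain ⟨v, hv, hz⟩ := exists_unit_orthogonal _ (h u hu)
    exact ⟨v, hv, fun g => (hz g).le⟩
  · intro h
    have hne : Nonempty {x : EuclideanSpace ℝ (Fin (n + 1)) // ‖x‖ = 1} :=
      ⟨⟨EuclideanSpace.single 0 1, by simp⟩⟩
    have key : ∀ u : {x : EuclideanSpace ℝ (Fin (n + 1)) // ‖x‖ = 1},
        (⨆ v : {x : EuclideanSpace ℝ (Fin (n + 1)) // ‖x‖ = 1}, ⨅ g : Γ,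
          Real.arccos ⟪ρ g u.1, v.1⟫) = Real.pi / 2 := by
      intro u
      have hub : ∀ v : {x : EuclideanSpace ℝ (Fin (n + 1)) // ‖x‖ = 1},
          (⨅ g : Γ, Real.arccos ⟪ρ g u.1, v.1⟫) ≤ Real.pi / 2 := by
        intro v
        obtain ⟨g, -, hg⟩ : ∃ g ∈ (Finset.univ : Finset Γ), 0 ≤ ⟪ρ g u.1, v.1⟫ := by
          by_contra! hcon
          have := Finset.sum_neg hcon Finset.univ_nonempty
          rw [orbit_inner_sum ρ hfree] at this
          exact lt_irrefl _ this
        exact (ciInf_le (Set.finite_range _).bddBelow g).trans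
          (Real.arccos_le_pi_div_two.mpr hg)
      apply le_antisymm (ciSup_le hub)
      obtain ⟨v, hv, hz⟩ := exists_unit_orthogonal _ (h u.1 u.2)
      refine le_ciSup_of_le ⟨Real.pi / 2, ?_⟩ ⟨v, hv⟩ ?_
      · rintro _ ⟨v, rfl⟩
        exact hub v
      · refine le_ciInf fun g => ?_
        have := hz g
        simp only at this ⊢
        rw [this, Real.arccos_zero]
    unfold sphereQuotRadius
    simp only [key]
    exact ciInf_const
end

section
/- Let Γ be a finite group and ρ: Γ → O(n+1) a fixed point free orthogonal representation that decomposes as an orthogonal direct sum ρ = ρ₁ ⊕ ρ₂ ⊕ ⋯ ⊕ ρ_k of k ≥ 2 irreducible subrepresentations. If the quotient S^n/ρ(Γ) has radius π/2 (equivalently, for every unit vector u ∈ ℝ^{n+1} there is a unit vector v with ⟨ρ(g)u, v⟩ ≤ 0 for all g ∈ Γ), then ρ_i is equivalent to ρ_j for some i ≠ j. -/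
open scoped RealInnerProductSpace

section Defs

variable {Γ : Type*} [Group Γ] {E : Type*} [NormedAddCommGroup E] [InnerProductSpace ℝ E]

/-- A subspace `W` is invariant under the orthogonal representation `ρ`. -/
def IsInvariantSubspace (ρ : Γ →* (E ≃ₗᵢ[ℝ] E)) (W : Submodule ℝ E) : Prop :=
  ∀ g : Γ, ∀ x ∈ W, ρ g x ∈ W

/-- A nonzero invariant subspace `W` is an irreducible subrepresentation of `ρ` if it
contains no invariant subspace other than `⊥` and itself. -/
def IsIrreducibleSubrep (ρ : Γ →* (E ≃ₗᵢ[ℝ] E)) (W : Submodule ℝ E) : Prop :=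
  W ≠ ⊥ ∧ IsInvariantSubspace ρ W ∧
    ∀ U : Submodule ℝ E, U ≤ W → IsInvariantSubspace ρ U → U = ⊥ ∨ U = W

/-- Two invariant subspaces carry equivalent subrepresentations of `ρ` if there is an
orthogonal (isometric linear) isomorphism between them intertwining the actions. -/
def AreEquivalentSubreps (ρ : Γ →* (E ≃ₗᵢ[ℝ] E)) (W₁ W₂ : Submodule ℝ E) : Prop :=
  ∃ e : W₁ ≃ₗᵢ[ℝ] W₂, ∀ (g : Γ) (x : W₁) (hx : ρ g (x : E) ∈ W₁),
    ((e ⟨ρ g (x : E), hx⟩ : W₂) : E) = ρ g ((e x : W₂) : E)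

end Defs


/-- The averaged rank one operator. -/
noncomputable def avgOp {Γ : Type*} [Group Γ] [Fintype Γ] {E : Type*} [NormedAddCommGroup E]
    [InnerProductSpace ℝ E] (ρ : Γ →* (E ≃ₗᵢ[ℝ] E)) (a b : E) : E →ₗ[ℝ] E where
  toFun x := ∑ g : Γ, ⟪x, ρ g a⟫ • ρ g b
  map_add' x y := by simp [inner_add_left, add_smul, Finset.sum_add_distrib]
  map_smul' c x := by simp [inner_smul_left, mul_smul, Finset.smul_sum]

section Helpers

variable {Γ : Type*} [Group Γ] [Fintype Γ] {E : Type*} [NormedAddCommGroup E]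
    [InnerProductSpace ℝ E]

lemma avgOp_apply (ρ : Γ →* (E ≃ₗᵢ[ℝ] E)) (a b x : E) :
    avgOp ρ a b x = ∑ g : Γ, ⟪x, ρ g a⟫ • ρ g b := rfl

lemma inner_rho_inv (ρ : Γ →* (E ≃ₗᵢ[ℝ] E)) (g : Γ) (x y : E) :
    ⟪ρ g x, y⟫ = ⟪x, ρ g⁻¹ y⟫ := by
  have h : ρ g (ρ g⁻¹ y) = y := by
    have : (ρ g * ρ g⁻¹) y = y := by rw [← map_mul]; simp
    exact this
  conv_lhs => rw [← h]
  exact (ρ g).inner_map_map _ _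

lemma rho_mul_apply (ρ : Γ →* (E ≃ₗᵢ[ℝ] E)) (g h : Γ) (x : E) :
    ρ (g * h) x = ρ g (ρ h x) := by
  rw [map_mul]; rfl

lemma avgOp_equivariant (ρ : Γ →* (E ≃ₗᵢ[ℝ] E)) (a b x : E) (h : Γ) :
    avgOp ρ a b (ρ h x) = ρ h (avgOp ρ a b x) := by
  rw [avgOp_apply, avgOp_apply, map_sum, ← Equiv.sum_comp (Equiv.mulLeft h)]
  refine Finset.sum_congr rfl fun g _ => ?_
  simp only [Equiv.coe_mulLeft, rho_mul_apply, map_smul, LinearIsometryEquiv.inner_map_map]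

lemma avgOp_adjoint (ρ : Γ →* (E ≃ₗᵢ[ℝ] E)) (a b x y : E) :
    ⟪avgOp ρ a b x, y⟫ = ⟪x, avgOp ρ b a y⟫ := by
  rw [avgOp_apply, avgOp_apply, sum_inner, inner_sum]
  refine Finset.sum_congr rfl fun g _ => ?_
  rw [real_inner_smul_left, real_inner_smul_right, real_inner_comm y]; ring

lemma avgOp_mem (ρ : Γ →* (E ≃ₗᵢ[ℝ] E)) {W : Submodule ℝ E} (hW : IsInvariantSubspace ρ W)
    (a : E) {b : E} (hb : b ∈ W) (x : E) : avgOp ρ a b x ∈ W :=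
  W.sum_mem fun g _ => W.smul_mem _ (hW g b hb)

lemma inner_avgOp (ρ : Γ →* (E ≃ₗᵢ[ℝ] E)) (a b x y : E) :
    ⟪avgOp ρ a b x, y⟫ = ∑ g : Γ, ⟪ρ g x, a⟫ * ⟪ρ g y, b⟫ := by
  rw [avgOp_apply, sum_inner, ← Equiv.sum_comp (Equiv.inv Γ)]
  refine Finset.sum_congr rfl fun g _ => ?_
  rw [real_inner_smul_left, inner_rho_inv ρ g x a, inner_rho_inv ρ g y b,
    real_inner_comm y]; rfl

/-- Schur: either the averaged operator vanishes or the subrepresentations are equivalent. -/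
lemma schur_avgOp [FiniteDimensional ℝ E] (ρ : Γ →* (E ≃ₗᵢ[ℝ] E)) {W₁ W₂ : Submodule ℝ E}
    (h₁ : IsIrreducibleSubrep ρ W₁) (h₂ : IsIrreducibleSubrep ρ W₂)
    (hne : ¬ AreEquivalentSubreps ρ W₁ W₂) {a b : E} (ha : a ∈ W₁) (hb : b ∈ W₂) :
    ∀ x ∈ W₁, avgOp ρ a b x = 0 := by
  set T := avgOp ρ a b with hT
  set T' := avgOp ρ b a with hT'
  have hadj : ∀ x y, ⟪T x, y⟫ = ⟪x, T' y⟫ := avgOp_adjoint ρ a b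
  have hTe : ∀ g x, T (ρ g x) = ρ g (T x) := fun g x => avgOp_equivariant ρ a b x g
  have hTe' : ∀ g x, T' (ρ g x) = ρ g (T' x) := fun g x => avgOp_equivariant ρ b a x g
  have hTm : ∀ x, T x ∈ W₂ := avgOp_mem ρ h₂.2.1 a hb
  have hTm' : ∀ x, T' x ∈ W₁ := avgOp_mem ρ h₁.2.1 b ha
  let S : W₁ →ₗ[ℝ] W₁ := ((T' ∘ₗ T).restrict (p := W₁) (q := W₁) fun x _ => hTm' _)
  have hS : ∀ x : W₁, ((S x : W₁) : E) = T' (T x) := fun x => rfl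
  have hSsym : S.IsSymmetric := by
    intro x y
    rw [Submodule.coe_inner, Submodule.coe_inner, hS, hS, ← hadj, real_inner_comm, ← hadj,
      real_inner_comm]
  have : Nontrivial W₁ := Submodule.nontrivial_iff_ne_bot.2 h₁.1
  obtain ⟨μ, hμ⟩ : ∃ μ : ℝ, Module.End.HasEigenvalue S μ :=
    ⟨_, hSsym.hasEigenvalue_iSup_of_finiteDimensional⟩
  obtain ⟨z, hz⟩ := hμ.exists_hasEigenvector
  have hz1 : T' (T z) = μ • (z : E) := by
    rw [← hS, hz.apply_eq_smul]; rfl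
  have hz0 : (z : E) ≠ 0 := by simpa using hz.2
  -- the eigenspace is everything
  have hall : ∀ x ∈ W₁, T' (T x) = μ • x := by
    let U : Submodule ℝ E := W₁ ⊓ LinearMap.ker ((T' ∘ₗ T) - μ • LinearMap.id)
    have hUmem : ∀ x, x ∈ U ↔ x ∈ W₁ ∧ T' (T x) = μ • x := by
      intro x
      simp [U, Submodule.mem_inf, sub_eq_zero]
    have hUinv : IsInvariantSubspace ρ U := by
      intro g x hx
      rw [hUmem] at hx ⊢
      refine ⟨h₁.2.1 g x hx.1, ?_⟩
      rw [hTe, hTe', hx.2, map_smul]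
    rcases h₁.2.2 U inf_le_left hUinv with h | h
    · exfalso
      have : (z : E) ∈ U := (hUmem _).2 ⟨z.2, hz1⟩
      rw [h] at this
      exact hz0 (by simpa using this)
    · intro x hx
      rw [← h] at hx
      exact ((hUmem x).1 hx).2
  have hinn : ∀ x ∈ W₁, ‖T x‖ ^ 2 = μ * ‖x‖ ^ 2 := by
    intro x hx
    rw [← real_inner_self_eq_norm_sq, ← real_inner_self_eq_norm_sq, hadj, hall x hx,
      real_inner_smul_right]
  by_cases hμ0 : μ = 0
  · intro x hx
    have := hinn x hx
    rw [hμ0] at this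
    simpa using this
  exfalso
  have hμpos : 0 < μ := by
    have h1 := hinn z z.2
    have h2 : 0 < ‖(z : E)‖ ^ 2 := by positivity
    have h3 : 0 ≤ μ * ‖(z : E)‖ ^ 2 := h1 ▸ sq_nonneg _
    exact lt_of_le_of_ne (nonneg_of_mul_nonneg_left h3 h2) (Ne.symm hμ0)
  have hsq : 0 < √μ := Real.sqrt_pos.2 hμpos
  let F₀ : W₁ →ₗ[ℝ] W₂ := (((√μ)⁻¹ • T).restrict (p := W₁) (q := W₂)
    fun x _ => W₂.smul_mem _ (hTm x))
  have hF₀ : ∀ x : W₁, ((F₀ x : W₂) : E) = (√μ)⁻¹ • T x := fun x => rfl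
  let F : W₁ →ₗᵢ[ℝ] W₂ := ⟨F₀, by
    intro x
    rw [← Submodule.norm_coe, ← Submodule.norm_coe, hF₀, norm_smul]
    have h1 := hinn x x.2
    have h2 : ‖T x‖ = √μ * ‖(x : E)‖ := by
      rw [← Real.sqrt_sq (norm_nonneg (T x)), h1, Real.sqrt_mul hμpos.le,
        Real.sqrt_sq (norm_nonneg _)]
    rw [h2, norm_inv, Real.norm_of_nonneg hsq.le]
    field_simp⟩
  have hF : ∀ x : W₁, ((F x : W₂) : E) = (√μ)⁻¹ • T x := fun x => rfl
  have hsurj : Function.Surjective F := by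
    have hR : Submodule.map T W₁ = W₂ := by
      refine (h₂.2.2 (Submodule.map T W₁) ?_ ?_).resolve_left ?_
      · rintro _ ⟨x, _, rfl⟩
        exact hTm x
      · rintro g _ ⟨x, hx, rfl⟩
        exact ⟨ρ g x, h₁.2.1 g x hx, hTe g x⟩
      · intro h
        have : T z ∈ Submodule.map T W₁ := ⟨z, z.2, rfl⟩
        rw [h, Submodule.mem_bot] at this
        rw [this, map_zero] at hz1
        exact (smul_ne_zero hμ0 hz0) hz1.symm
    rintro ⟨y, hy⟩
    rw [← hR] at hy
    obtain ⟨x, hx, rfl⟩ := hy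
    refine ⟨√μ • ⟨x, hx⟩, Subtype.ext ?_⟩
    rw [hF]
    simp [smul_smul, hsq.ne']
  refine hne ⟨LinearIsometryEquiv.ofSurjective F hsurj, ?_⟩
  intro g x hx
  change ((F _ : W₂) : E) = ρ g ((F x : W₂) : E)
  rw [hF, hF, map_smul, ← hTe]

lemma equiv_of_subsingleton [FiniteDimensional ℝ E] [Subsingleton Γ] (ρ : Γ →* (E ≃ₗᵢ[ℝ] E))
    {W₁ W₂ : Submodule ℝ E}
    (h₁ : IsIrreducibleSubrep ρ W₁) (h₂ : IsIrreducibleSubrep ρ W₂) :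
    AreEquivalentSubreps ρ W₁ W₂ := by
  have hρ : ∀ g x, ρ g x = x := by
    intro g x
    rw [Subsingleton.elim g 1, map_one]; rfl
  have key : ∀ W : Submodule ℝ E, IsIrreducibleSubrep ρ W → Module.finrank ℝ W = 1 := by
    intro W h
    obtain ⟨x, hx, hx0⟩ := Submodule.exists_mem_ne_zero_of_ne_bot h.1
    have := (h.2.2 (ℝ ∙ x) (by simpa using hx) (fun g y hy => by rwa [hρ])).resolve_left
      (by simpa using hx0)
    rw [← this]
    exact finrank_span_singleton hx0
  refine ⟨((stdOrthonormalBasis ℝ W₁).reindex (finCongr (key W₁ h₁))).equiv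
    ((stdOrthonormalBasis ℝ W₂).reindex (finCongr (key W₂ h₂))) (Equiv.refl _), ?_⟩
  intro g x hx
  have hx' : (⟨ρ g (x : E), hx⟩ : W₁) = x := Subtype.ext (hρ g x)
  rw [hx', hρ g]

end Helpers

/-- If a fixed point free orthogonal representation `ρ : Γ → O(n+1)` of a finite group
decomposes as an orthogonal direct sum of `k ≥ 2` irreducible subrepresentations and the
space form `Sⁿ/ρ(Γ)` has radius `π/2` (equivalently: for every unit vector `u` there is a
unit vector `v` with `⟪ρ(g)u, v⟫ ≤ 0` for all `g`), then two distinct summands are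
equivalent. -/
theorem exists_equivalent_summands_of_radius_eq_half_pi
    {n k : ℕ} {Γ : Type*} [Group Γ] [Fintype Γ] (hk : 2 ≤ k)
    (ρ : Γ →* (EuclideanSpace ℝ (Fin (n + 1)) ≃ₗᵢ[ℝ] EuclideanSpace ℝ (Fin (n + 1))))
    (hfree : ∀ g : Γ, g ≠ 1 → ∀ x : EuclideanSpace ℝ (Fin (n + 1)), x ≠ 0 → ρ g x ≠ x)
    (V : Fin k → Submodule ℝ (EuclideanSpace ℝ (Fin (n + 1))))
    (horth : ∀ i j, i ≠ j → ∀ x ∈ V i, ∀ y ∈ V j, ⟪x, y⟫ = 0)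
    (hspan : (⨆ i, V i) = ⊤)
    (hirr : ∀ i, IsIrreducibleSubrep ρ (V i))
    (hrad : ∀ u : EuclideanSpace ℝ (Fin (n + 1)), ‖u‖ = 1 →
      ∃ v : EuclideanSpace ℝ (Fin (n + 1)), ‖v‖ = 1 ∧ ∀ g : Γ, ⟪ρ g u, v⟫ ≤ 0) :
    ∃ i j, i ≠ j ∧ AreEquivalentSubreps ρ (V i) (V j) := by
  classical
  rcases subsingleton_or_nontrivial Γ with hΓ | hΓ
  · exact ⟨⟨0, by omega⟩, ⟨1, by omega⟩, by simp [Fin.ext_iff],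
      equiv_of_subsingleton ρ (hirr _) (hirr _)⟩
  by_contra hcon
  push Not at hcon
  have hpick : ∀ i, ∃ x, x ∈ V i ∧ x ≠ 0 := fun i => by
    obtain ⟨x, hx, hx0⟩ := Submodule.exists_mem_ne_zero_of_ne_bot (hirr i).1
    exact ⟨x, hx, hx0⟩
  choose w hwV hw0 using hpick
  have hinv : ∀ i, IsInvariantSubspace ρ (V i) := fun i => (hirr i).2.1
  set s := ∑ i, w i with hs
  have hs0 : s ≠ 0 := by
    intro h0
    let i₀ : Fin k := ⟨0, by omega⟩
    have h1 : ⟪s, w i₀⟫ = ⟪w i₀, w i₀⟫ := by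
      rw [hs, sum_inner, Finset.sum_eq_single i₀]
      · intro j _ hj
        exact horth j i₀ hj _ (hwV j) _ (hwV i₀)
      · simp
    rw [h0, inner_zero_left] at h1
    exact hw0 i₀ (inner_self_eq_zero.1 h1.symm)
  obtain ⟨v, hv1, hv⟩ := hrad (‖s‖⁻¹ • s) (by
    rw [norm_smul, norm_inv, norm_norm, inv_mul_cancel₀ (norm_ne_zero_iff.2 hs0)])
  have hle : ∀ g : Γ, ⟪ρ g s, v⟫ ≤ 0 := by
    intro g
    have h1 := hv g
    rw [map_smul, real_inner_smul_left] at h1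
    have h2 : 0 < ‖s‖⁻¹ := inv_pos.2 (norm_pos_iff.2 hs0)
    exact nonpos_of_mul_nonpos_right h1 h2
  have hsum : ∑ g : Γ, ρ g s = 0 := by
    obtain ⟨h, hh⟩ := exists_ne (1 : Γ)
    by_contra hne
    refine hfree h hh _ hne ?_
    rw [map_sum]
    simp_rw [← rho_mul_apply]
    exact Equiv.sum_comp (Equiv.mulLeft h) (fun g => ρ g s)
  have hzero : ∀ g : Γ, ⟪ρ g s, v⟫ = 0 := by
    have h1 : ∑ g : Γ, ⟪ρ g s, v⟫ = 0 := by rw [← sum_inner, hsum, inner_zero_left]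
    intro g
    exact (Finset.sum_eq_zero_iff_of_nonpos (fun g _ => hle g)).1 h1 g (Finset.mem_univ g)
  obtain ⟨c, hcV, hc⟩ : ∃ c : Fin k → EuclideanSpace ℝ (Fin (n + 1)),
      (∀ i, c i ∈ V i) ∧ ∑ i, c i = v := by
    have hvm : v ∈ ⨆ i, V i := by rw [hspan]; trivial
    obtain ⟨c, hc⟩ := (Submodule.mem_iSup_iff_exists_finsupp V v).1 hvm
    refine ⟨fun i => c i, hc.1, ?_⟩
    rw [← hc.2, Finsupp.sum_fintype]
    simp
  have hexp : ∀ g : Γ, ∑ i, ⟪ρ g (w i), c i⟫ = 0 := by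
    intro g
    rw [← hzero g, hs, ← hc, map_sum, sum_inner]
    refine Finset.sum_congr rfl fun i _ => ?_
    rw [inner_sum, Finset.sum_eq_single i]
    · intro j _ hj
      exact horth i j hj.symm _ (hinv i g _ (hwV i)) _ (hcV j)
    · simp
  have hcross : ∀ i j, i ≠ j → ∑ g : Γ, ⟪ρ g (w i), c i⟫ * ⟪ρ g (w j), c j⟫ = 0 := by
    intro i j hij
    rw [← inner_avgOp, schur_avgOp ρ (hirr i) (hirr j) (hcon i j hij) (hcV i) (hcV j) _ (hwV i),
      inner_zero_left]
  have hcoef : ∀ i, ∀ g : Γ, ⟪ρ g (w i), c i⟫ = 0 := by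
    intro i
    have h1 : ∑ g : Γ, ⟪ρ g (w i), c i⟫ * ⟪ρ g (w i), c i⟫ = 0 := by
      have h2 : ∑ g : Γ, ∑ j, ⟪ρ g (w i), c i⟫ * ⟪ρ g (w j), c j⟫ = 0 := by
        simp_rw [← Finset.mul_sum, hexp, mul_zero]
        simp
      rw [Finset.sum_comm, Finset.sum_eq_single i] at h2
      · exact h2
      · intro j _ hj
        exact hcross i j hj.symm
      · simp
    intro g
    exact mul_self_eq_zero.1 ((Finset.sum_eq_zero_iff_of_nonneg
      (fun g _ => mul_self_nonneg _)).1 h1 g (Finset.mem_univ g))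
  have hc0 : ∀ i, c i = 0 := by
    intro i
    have hUinv : IsInvariantSubspace ρ (Submodule.span ℝ (Set.range fun g : Γ => ρ g (w i))) := by
      intro h x hx
      induction hx using Submodule.span_induction with
      | mem x hx =>
        obtain ⟨g, rfl⟩ := hx
        exact Submodule.subset_span ⟨h * g, rho_mul_apply ρ h g _⟩
      | zero => simp
      | add x y _ _ hx hy => rw [map_add]; exact Submodule.add_mem _ hx hy
      | smul a x _ hx => rw [map_smul]; exact Submodule.smul_mem _ a hx
    have hwm : w i ∈ Submodule.span ℝ (Set.range fun g : Γ => ρ g (w i)) :=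
      Submodule.subset_span ⟨1, by simp⟩
    have hU := ((hirr i).2.2 _ (Submodule.span_le.2 (by
      rintro _ ⟨g, rfl⟩
      exact hinv i g _ (hwV i))) hUinv).resolve_left (by
        intro h
        rw [h] at hwm
        exact hw0 i (by simpa using hwm))
    have hcm := hcV i
    rw [← hU] at hcm
    have hperp : ∀ x ∈ Submodule.span ℝ (Set.range fun g : Γ => ρ g (w i)), ⟪x, c i⟫ = 0 := by
      intro x hx
      induction hx using Submodule.span_induction with
      | mem x hx =>
        obtain ⟨g, rfl⟩ := hx
        exact hcoef i g
      | zero => simp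
      | add x y _ _ hx hy => rw [inner_add_left, hx, hy, add_zero]
      | smul a x _ hx => rw [real_inner_smul_left, hx, mul_zero]
    exact inner_self_eq_zero.1 (hperp _ hcm)
  have : v = 0 := by rw [← hc]; simp [hc0]
  rw [this, norm_zero] at hv1
  exact zero_ne_one hv1
end

section
/- Let Γ be a finite group, ρ: Γ → O(n+1) a fixed point free orthogonal representation with rad S^n/ρ(Γ) = π/2, and σ: Γ → O(d) another fixed point free orthogonal representation of Γ. Then rad S^{n+d}/(ρ ⊕ σ)(Γ) = π/2, where ρ ⊕ σ acts on ℝ^{n+1} ⊕ ℝ^d. -/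
open scoped RealInnerProductSpace

lemma arccos_smul_le_max {t c : ℝ} (h0 : 0 ≤ t) (h1 : t ≤ 1) :
    Real.arccos (t * c) ≤ max (Real.pi / 2) (Real.arccos c) := by
  rcases le_total 0 c with hc | hc
  · exact le_max_of_le_left (Real.arccos_le_pi_div_two.2 (mul_nonneg h0 hc))
  · exact le_max_of_le_right (Real.arccos_le_arccos (by nlinarith))

lemma min_le_arccos_smul {t c : ℝ} (h0 : 0 ≤ t) (h1 : t ≤ 1) :
    min (Real.pi / 2) (Real.arccos c) ≤ Real.arccos (t * c) := by
  rcases le_total 0 c with hc | hc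
  · exact min_le_of_right_le (Real.arccos_le_arccos (by nlinarith))
  · refine min_le_of_left_le ?_
    rw [← Real.arccos_zero]
    exact Real.arccos_le_arccos (by nlinarith)

section quot

variable {Γ : Type*} [Group Γ] [Fintype Γ]
  {E : Type*} [NormedAddCommGroup E] [InnerProductSpace ℝ E]

lemma quot_bddBelow (ρ : Γ →* (E ≃ₗᵢ[ℝ] E)) (u v : E) :
    BddBelow (Set.range fun g : Γ => Real.arccos ⟪ρ g u, v⟫) :=
  ⟨0, by rintro _ ⟨g, rfl⟩; exact Real.arccos_nonneg _⟩

lemma quot_bddAbove (ρ : Γ →* (E ≃ₗᵢ[ℝ] E)) (u : E) :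
    BddAbove (Set.range fun v : {x : E // ‖x‖ = 1} => ⨅ g : Γ, Real.arccos ⟪ρ g u, v.1⟫) :=
  ⟨Real.pi, by
    rintro _ ⟨v, rfl⟩
    exact (ciInf_le (quot_bddBelow ρ u v.1) 1).trans (Real.arccos_le_pi _)⟩

lemma quot_bddBelow_sup (ρ : Γ →* (E ≃ₗᵢ[ℝ] E)) :
    BddBelow (Set.range fun u : {x : E // ‖x‖ = 1} =>
      ⨆ v : {x : E // ‖x‖ = 1}, ⨅ g : Γ, Real.arccos ⟪ρ g u.1, v.1⟫) :=
  ⟨0, by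
    rintro _ ⟨u, rfl⟩
    exact Real.iSup_nonneg fun v => Real.iInf_nonneg fun g => Real.arccos_nonneg _⟩

end quot

lemma exists_unit_smul {E : Type*} [NormedAddCommGroup E] [InnerProductSpace ℝ E]
    (e : {x : E // ‖x‖ = 1}) (x : E) : ∃ w : {x : E // ‖x‖ = 1}, x = ‖x‖ • w.1 := by
  by_cases hx : x = 0
  · exact ⟨e, by simp [hx]⟩
  · have h : ‖x‖ ≠ 0 := norm_ne_zero_iff.2 hx
    refine ⟨⟨‖x‖⁻¹ • x, ?_⟩, ?_⟩
    · rw [norm_smul, norm_inv, norm_norm, inv_mul_cancel₀ h]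
    · simp only [smul_smul, mul_inv_cancel₀ h, one_smul]

/-- Let `Γ` be a finite group, `ρ : Γ → O(n+1)` a fixed point free orthogonal
representation with `rad Sⁿ/ρ(Γ) = π/2` and `σ : Γ → O(d)` another fixed point free
orthogonal representation.  Then `rad S^{n+d}/(ρ ⊕ σ)(Γ) = π/2`, where `ρ ⊕ σ` is the
direct sum representation `τ` acting on `ℝ^{n+1} ⊕ ℝ^d` (with the `L²` product metric)
by `τ(g)(x, y) = (ρ(g)x, σ(g)y)`. -/
theorem radius_direct_sum_eq_half_pi
    {n d : ℕ} {Γ : Type*} [Group Γ] [Fintype Γ]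
    (ρ : Γ →* (EuclideanSpace ℝ (Fin (n + 1)) ≃ₗᵢ[ℝ] EuclideanSpace ℝ (Fin (n + 1))))
    (σ : Γ →* (EuclideanSpace ℝ (Fin d) ≃ₗᵢ[ℝ] EuclideanSpace ℝ (Fin d)))
    (hρfree : ∀ g : Γ, g ≠ 1 → ∀ x : EuclideanSpace ℝ (Fin (n + 1)), x ≠ 0 → ρ g x ≠ x)
    (hσfree : ∀ g : Γ, g ≠ 1 → ∀ y : EuclideanSpace ℝ (Fin d), y ≠ 0 → σ g y ≠ y)
    (hρrad : sphereQuotRadius ρ = Real.pi / 2)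
    (τ : Γ →* (WithLp 2 (EuclideanSpace ℝ (Fin (n + 1)) × EuclideanSpace ℝ (Fin d)) ≃ₗᵢ[ℝ]
        WithLp 2 (EuclideanSpace ℝ (Fin (n + 1)) × EuclideanSpace ℝ (Fin d))))
    (hτ : ∀ (g : Γ) (x : EuclideanSpace ℝ (Fin (n + 1))) (y : EuclideanSpace ℝ (Fin d)),
      τ g ((WithLp.equiv 2 (EuclideanSpace ℝ (Fin (n + 1)) × EuclideanSpace ℝ (Fin d))).symm
            (x, y)) =
        (WithLp.equiv 2 (EuclideanSpace ℝ (Fin (n + 1)) × EuclideanSpace ℝ (Fin d))).symm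
          (ρ g x, σ g y)) :
    sphereQuotRadius τ = Real.pi / 2 := by
  have e : {x : EuclideanSpace ℝ (Fin (n + 1)) // ‖x‖ = 1} :=
    ⟨EuclideanSpace.single 0 1, by simp⟩
  have hτ' : ∀ (g : Γ) (p q : WithLp 2 (EuclideanSpace ℝ (Fin (n + 1)) ×
      EuclideanSpace ℝ (Fin d))),
      ⟪τ g p, q⟫ = ⟪ρ g p.fst, q.fst⟫ + ⟪σ g p.snd, q.snd⟫ := by
    intro g p q
    have h : τ g p = WithLp.toLp 2 (ρ g p.fst, σ g p.snd) := hτ g p.fst p.snd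
    rw [h, WithLp.prod_inner_apply]
    rfl
  have hfst : ∀ p : WithLp 2 (EuclideanSpace ℝ (Fin (n + 1)) × EuclideanSpace ℝ (Fin d)),
      ‖p‖ = 1 → ‖p.fst‖ ≤ 1 := by
    intro p hp
    have h := WithLp.prod_norm_sq_eq_of_L2 p
    rw [hp] at h
    nlinarith [sq_nonneg ‖p.snd‖, norm_nonneg p.fst]
  let inj : {x : EuclideanSpace ℝ (Fin (n + 1)) // ‖x‖ = 1} →
      {p : WithLp 2 (EuclideanSpace ℝ (Fin (n + 1)) × EuclideanSpace ℝ (Fin d)) // ‖p‖ = 1} :=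
    fun x => ⟨WithLp.toLp 2 (x.1, 0), by simp [x.2]⟩
  have hf : ∀ u : {x : EuclideanSpace ℝ (Fin (n + 1)) // ‖x‖ = 1},
      Real.pi / 2 ≤ ⨆ v : {x : EuclideanSpace ℝ (Fin (n + 1)) // ‖x‖ = 1}, ⨅ g : Γ,
        Real.arccos ⟪ρ g u.1, v.1⟫ := by
    intro u
    rw [← hρrad]
    exact ciInf_le (quot_bddBelow_sup ρ) u
  have : Nonempty {x : EuclideanSpace ℝ (Fin (n + 1)) // ‖x‖ = 1} := ⟨e⟩
  have : Nonempty {p : WithLp 2 (EuclideanSpace ℝ (Fin (n + 1)) × EuclideanSpace ℝ (Fin d)) //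
    ‖p‖ = 1} := ⟨inj e⟩
  apply le_antisymm
  · -- upper bound: use base points `(u, 0)`
    rw [← hρrad]
    refine le_ciInf fun u => (ciInf_le (quot_bddBelow_sup τ) (inj u)).trans ?_
    refine ciSup_le fun v => ?_
    obtain ⟨w, hw⟩ := exists_unit_smul e v.1.fst
    obtain ⟨g, hg⟩ := exists_eq_ciInf_of_finite (f := fun g : Γ => Real.arccos ⟪ρ g u.1, w.1⟫)
    refine (ciInf_le (quot_bddBelow τ _ _) g).trans ?_
    have h : ⟪τ g (inj u).1, v.1⟫ = ‖v.1.fst‖ * ⟪ρ g u.1, w.1⟫ := by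
      rw [hτ', ← real_inner_smul_right, ← hw]
      simp [inj]
    rw [h]
    refine (arccos_smul_le_max (norm_nonneg _) (hfst _ v.2)).trans (max_le (hf u) ?_)
    have hg' : Real.arccos ⟪ρ g u.1, w.1⟫ = _ := hg
    rw [hg']
    exact le_ciSup (quot_bddAbove ρ u.1) w
  · -- lower bound: use test points `(w, 0)`
    refine le_ciInf fun u => ?_
    by_contra! hlt
    obtain ⟨z, hz⟩ := exists_unit_smul e u.1.fst
    refine absurd (hf z) (not_le.2 (lt_of_le_of_lt (ciSup_le fun w => ?_) hlt))
    have h1 : min (Real.pi / 2) (⨅ g : Γ, Real.arccos ⟪ρ g z.1, w.1⟫) ≤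
        ⨅ g : Γ, Real.arccos ⟪τ g u.1, (inj w).1⟫ := by
      refine le_ciInf fun g => ?_
      have h : ⟪τ g u.1, (inj w).1⟫ = ‖u.1.fst‖ * ⟪ρ g z.1, w.1⟫ := by
        rw [hτ', ← real_inner_smul_left, ← map_smul, ← hz]
        simp [inj]
      rw [h]
      exact (min_le_min_left _ (ciInf_le (quot_bddBelow ρ _ _) g)).trans
        (min_le_arccos_smul (norm_nonneg _) (hfst _ u.2))
    have h2 := h1.trans (le_ciSup (quot_bddAbove τ u.1) (inj w))
    rcases min_le_iff.1 h2 with h3 | h3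
    · exact absurd h3 (not_le.2 hlt)
    · exact h3
end

section
/- Let d ≥ 1, let g₁, …, g_{d+1} be orthogonal transformations of ℝ^d, and let u, v be unit vectors in ℝ^d. Suppose the families (g₁u, …, g_d u) and (g₁v, …, g_d v) are each linearly independent (hence bases of ℝ^d), and let (a₁, …, a_d) and (b₁, …, b_d) be the unique coefficients with a₁g₁u + ⋯ + a_d g_d u = g_{d+1}u and b₁g₁v + ⋯ + b_d g_d v = g_{d+1}v. If (a₁, …, a_d) ≠ (b₁, …, b_d), then the d+1 vectors (g_i u, g_i v) ∈ ℝ^d × ℝ^d = ℝ^{2d}, for i = 1, …, d+1, are linearly independent. -/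
/-- Let `g₁, …, g_{d+1}` be orthogonal transformations of `ℝ^d` and `u, v` unit vectors.
Suppose `(g₁u, …, g_d u)` and `(g₁v, …, g_d v)` are each linearly independent (hence
bases), and let `a`, `b` be the coefficient vectors expressing `g_{d+1}u` and `g_{d+1}v`
in these bases.  If `a ≠ b`, then the `d+1` vectors `(gᵢu, gᵢv) ∈ ℝ^d × ℝ^d = ℝ^{2d}`
are linearly independent. -/
theorem linearIndependent_pairs_of_distinct_coefficients
    {d : ℕ} (g : Fin (d + 1) → (EuclideanSpace ℝ (Fin d) ≃ₗᵢ[ℝ] EuclideanSpace ℝ (Fin d)))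
    (u v : EuclideanSpace ℝ (Fin d)) (hu : ‖u‖ = 1) (hv : ‖v‖ = 1)
    (hindu : LinearIndependent ℝ fun i : Fin d => g i.castSucc u)
    (hindv : LinearIndependent ℝ fun i : Fin d => g i.castSucc v)
    (a b : Fin d → ℝ)
    (ha : ∑ i : Fin d, a i • g i.castSucc u = g (Fin.last d) u)
    (hb : ∑ i : Fin d, b i • g i.castSucc v = g (Fin.last d) v)
    (hab : a ≠ b) :
    LinearIndependent ℝ fun i : Fin (d + 1) =>
      ((g i u, g i v) : EuclideanSpace ℝ (Fin d) × EuclideanSpace ℝ (Fin d)) := by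
  rw [Fintype.linearIndependent_iff] at hindu hindv ⊢
  intro c hc
  have h1 := congrArg Prod.fst hc
  have h2 := congrArg Prod.snd hc
  simp only [Prod.fst_sum, Prod.snd_sum, Prod.smul_mk, Prod.fst_zero, Prod.snd_zero] at h1 h2
  rw [Fin.sum_univ_castSucc, ← ha, Finset.smul_sum, ← Finset.sum_add_distrib] at h1
  rw [Fin.sum_univ_castSucc, ← hb, Finset.smul_sum, ← Finset.sum_add_distrib] at h2
  have k1 := hindu (fun i => c i.castSucc + c (Fin.last d) * a i)
    (by simpa only [add_smul, mul_smul] using h1)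
  have k2 := hindv (fun i => c i.castSucc + c (Fin.last d) * b i)
    (by simpa only [add_smul, mul_smul] using h2)
  have hl : c (Fin.last d) = 0 := by
    by_contra hne
    apply hab
    funext i
    have e1 := k1 i
    have e2 := k2 i
    exact mul_left_cancel₀ hne (by linarith)
  intro i
  refine Fin.lastCases hl (fun j => ?_) i
  have e1 := k1 j
  simpa [hl] using e1
end

section
/- Let Γ be a nontrivial finite group and ρ: Γ → O(n+1) a fixed point free orthogonal representation with |Γ| < n+1. Then every orbit of ρ(Γ) on S^n is contained in a proper ρ(Γ)-invariant linear subspace of ℝ^{n+1} (namely the span of the orbit), and consequently rad S^n/ρ(Γ) = π/2. -/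
open scoped RealInnerProductSpace

/-- Let `Γ` be a nontrivial finite group and `ρ : Γ → O(n+1)` a fixed point free
orthogonal representation with `|Γ| < n + 1`.  Then every orbit of `ρ(Γ)` on `Sⁿ` is
contained in a proper invariant linear subspace of `ℝ^{n+1}` (namely the span of the
orbit), and consequently `rad Sⁿ/ρ(Γ) = π/2`. -/
theorem radius_eq_half_pi_of_card_lt
    {n : ℕ} {Γ : Type*} [Group Γ] [Fintype Γ] [Nontrivial Γ]
    (ρ : Γ →* (EuclideanSpace ℝ (Fin (n + 1)) ≃ₗᵢ[ℝ] EuclideanSpace ℝ (Fin (n + 1))))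
    (hfree : ∀ g : Γ, g ≠ 1 → ∀ x : EuclideanSpace ℝ (Fin (n + 1)), x ≠ 0 → ρ g x ≠ x)
    (hcard : Fintype.card Γ < n + 1) :
    (∀ u : EuclideanSpace ℝ (Fin (n + 1)), ‖u‖ = 1 →
      Submodule.span ℝ (Set.range fun g : Γ => ρ g u) ≠ ⊤ ∧
      ∀ g : Γ, ∀ x ∈ Submodule.span ℝ (Set.range fun g : Γ => ρ g u),
        ρ g x ∈ Submodule.span ℝ (Set.range fun g : Γ => ρ g u)) ∧
    sphereQuotRadius ρ = Real.pi / 2 := by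
  have key : ∀ u : EuclideanSpace ℝ (Fin (n + 1)),
      Submodule.span ℝ (Set.range fun g : Γ => ρ g u) ≠ ⊤ := by
    intro u h
    have h1 := finrank_range_le_card (R := ℝ) (fun g : Γ => ρ g u)
    rw [Set.finrank, h, finrank_top, finrank_euclideanSpace_fin] at h1
    omega
  have hsum : ∀ u : EuclideanSpace ℝ (Fin (n + 1)), ∑ g : Γ, ρ g u = 0 := by
    intro u
    by_contra hne
    obtain ⟨h, hh⟩ := exists_ne (1 : Γ)
    apply hfree h hh _ hne
    rw [map_sum]
    refine Fintype.sum_equiv (Equiv.mulLeft h) _ _ ?_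
    intro g
    simp [map_mul]
  refine ⟨fun u _ => ⟨key u, ?_⟩, ?_⟩
  · intro g x hx
    induction hx using Submodule.span_induction with
    | mem x hx =>
      obtain ⟨k, rfl⟩ := hx
      refine Submodule.subset_span ⟨g * k, ?_⟩
      simp [map_mul]
    | zero => simp
    | add x y _ _ hx hy => rw [map_add]; exact Submodule.add_mem _ hx hy
    | smul a x _ hx => rw [map_smul]; exact Submodule.smul_mem _ _ hx
  · have hne : Nonempty {x : EuclideanSpace ℝ (Fin (n + 1)) // ‖x‖ = 1} :=
      ⟨⟨EuclideanSpace.single 0 1, by simp⟩⟩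
    have hle : ∀ u v : {x : EuclideanSpace ℝ (Fin (n + 1)) // ‖x‖ = 1},
        (⨅ g : Γ, Real.arccos ⟪ρ g u.1, v.1⟫) ≤ Real.pi / 2 := by
      intro u v
      have h0 : ∑ g : Γ, ⟪ρ g u.1, v.1⟫ = 0 := by
        rw [← sum_inner, hsum, inner_zero_left]
      obtain ⟨g, hg⟩ : ∃ g : Γ, 0 ≤ ⟪ρ g u.1, v.1⟫ := by
        by_contra! hcon
        have := Finset.sum_neg (s := Finset.univ) (fun g _ => hcon g) Finset.univ_nonempty
        linarith
      exact (ciInf_le (Set.finite_range _).bddBelow g).trans (Real.arccos_le_pi_div_two.2 hg)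
    have hsup : ∀ u : {x : EuclideanSpace ℝ (Fin (n + 1)) // ‖x‖ = 1},
        (⨆ v : {x : EuclideanSpace ℝ (Fin (n + 1)) // ‖x‖ = 1},
          ⨅ g : Γ, Real.arccos ⟪ρ g u.1, v.1⟫) = Real.pi / 2 := by
      intro u
      apply le_antisymm (ciSup_le (hle u))
      have hperp := mt Submodule.orthogonal_eq_bot_iff.1 (key u.1)
      obtain ⟨w, hw, hw0⟩ := Submodule.exists_mem_ne_zero_of_ne_bot hperp
      have hv : ‖(‖w‖⁻¹ : ℝ) • w‖ = 1 := norm_smul_inv_norm (𝕜 := ℝ) hw0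
      refine le_ciSup_of_le ⟨Real.pi / 2, ?_⟩ ⟨(‖w‖⁻¹ : ℝ) • w, hv⟩ ?_
      · rintro _ ⟨v, rfl⟩
        exact hle u v
      · refine le_ciInf fun g => ?_
        have : ⟪ρ g u.1, w⟫ = 0 :=
          (Submodule.mem_orthogonal _ _).1 hw _ (Submodule.subset_span ⟨g, rfl⟩)
        simp [inner_smul_right, this]
    unfold sphereQuotRadius
    simp only [hsup]
    exact ciInf_const
end

section
/- Let E be a finite-dimensional real inner product space and A: E → E a skew-adjoint linear map, i.e. ⟨A x, y⟩ = −⟨x, A y⟩ for all x, y ∈ E. Let V and H be orthogonal subspaces of E with A(V) ⊆ H and A(H) ⊆ V, and suppose V = K_v ⊕ L_v and H = K_h ⊕ L_h are orthogonal splittings with A(K_v) ⊆ K_h, A(L_v) ⊆ L_h, A(K_h) ⊆ K_v, and A(L_h) ⊆ L_v. Let v ∈ L_v be a unit vector maximizing ‖A w‖ over all unit vectors w ∈ L_v, and suppose A v = λ y where y is a unit vector and λ > 0. Then: (i) A y = −λ v; (ii) ‖A y‖ = max{ ‖A z‖ : z ∈ L_h, ‖z‖ = 1 }; (iii) A maps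 every vector of V orthogonal to v into the orthogonal complement of y; and (iv) A maps every vector of H orthogonal to y into the orthogonal complement of v. -/
open scoped RealInnerProductSpace

/-- Algebraic properties of the O'Neill tensor `A = A_X` of a Riemannian submersion
(Proposition "induction step" in the appendix).  Let `A` be a skew-adjoint endomorphism
of a finite-dimensional real inner product space `E`, let `V ⊥ H` with `A(V) ⊆ H`,
`A(H) ⊆ V`, and let `V = K_v ⊕ L_v`, `H = K_h ⊕ L_h` be orthogonal splittings preserved
by `A` as indicated.  Let `v ∈ L_v` be a unit vector maximizing `‖Aw‖` over unit vectors
of `L_v`, and write `Av = λy` with `y` a unit vector and `λ > 0`.  Then: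
(i) `Ay = -λv`;
(ii) `‖Ay‖ = max{‖Az‖ : z ∈ L_h, ‖z‖ = 1}` (and `y ∈ L_h`);
(iii) `A` maps vectors of `V` orthogonal to `v` into the orthogonal complement of `y`;
(iv) `A` maps vectors of `H` orthogonal to `y` into the orthogonal complement of `v`. -/
theorem oneill_tensor_induction_step
    {E : Type*} [NormedAddCommGroup E] [InnerProductSpace ℝ E] [FiniteDimensional ℝ E]
    (A : E →ₗ[ℝ] E) (hskew : ∀ x y : E, ⟪A x, y⟫ = -⟪x, A y⟫)
    (V H : Submodule ℝ E) (hVH : ∀ x ∈ V, ∀ y ∈ H, ⟪x, y⟫ = 0)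
    (hAV : ∀ x ∈ V, A x ∈ H) (hAH : ∀ y ∈ H, A y ∈ V)
    (Kv Lv Kh Lh : Submodule ℝ E)
    (hVsplit : Kv ⊔ Lv = V) (hKLv : ∀ x ∈ Kv, ∀ y ∈ Lv, ⟪x, y⟫ = 0)
    (hHsplit : Kh ⊔ Lh = H) (hKLh : ∀ x ∈ Kh, ∀ y ∈ Lh, ⟪x, y⟫ = 0)
    (hAKv : ∀ x ∈ Kv, A x ∈ Kh) (hALv : ∀ x ∈ Lv, A x ∈ Lh)
    (hAKh : ∀ x ∈ Kh, A x ∈ Kv) (hALh : ∀ x ∈ Lh, A x ∈ Lv)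
    (v : E) (hvLv : v ∈ Lv) (hv : ‖v‖ = 1)
    (hmax : ∀ w ∈ Lv, ‖w‖ = 1 → ‖A w‖ ≤ ‖A v‖)
    (y : E) (lam : ℝ) (hy : ‖y‖ = 1) (hlam : 0 < lam) (hAv : A v = lam • y) :
    A y = -(lam • v) ∧
    (y ∈ Lh ∧ ∀ z ∈ Lh, ‖z‖ = 1 → ‖A z‖ ≤ ‖A y‖) ∧
    (∀ w ∈ V, ⟪w, v⟫ = 0 → ⟪A w, y⟫ = 0) ∧
    (∀ z ∈ H, ⟪z, y⟫ = 0 → ⟪A z, v⟫ = 0) := by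
  have hnAv : ‖A v‖ = lam := by
    rw [hAv, norm_smul, hy, mul_one, Real.norm_of_nonneg hlam.le]
  have hb : ∀ w ∈ Lv, ‖A w‖ ≤ lam * ‖w‖ := by
    intro w hw
    by_cases h0 : w = 0
    · simp [h0]
    have hpos : 0 < ‖w‖ := norm_pos_iff.mpr h0
    have h1 := hmax (‖w‖⁻¹ • w) (Lv.smul_mem _ hw) (by
      rw [norm_smul, norm_inv, norm_norm, inv_mul_cancel₀ hpos.ne'])
    rw [map_smul, norm_smul, norm_inv, norm_norm, hnAv, inv_mul_le_iff₀ hpos] at h1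
    linarith
  have hc : ∀ z ∈ Lh, ‖A z‖ ≤ lam * ‖z‖ := by
    intro z hz
    have h1 : ‖A z‖ * ‖A z‖ = -⟪z, A (A z)⟫ := by
      rw [← hskew, real_inner_self_eq_norm_mul_norm]
    have h2 : -⟪z, A (A z)⟫ ≤ ‖z‖ * ‖A (A z)‖ :=
      (neg_le_abs _).trans (abs_real_inner_le_norm _ _)
    have h3 := mul_le_mul_of_nonneg_left (hb _ (hALh z hz)) (norm_nonneg z)
    by_contra! hcon
    have hpos : 0 < ‖A z‖ := lt_of_le_of_lt (by positivity) hcon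
    have h4 := mul_lt_mul_of_pos_right hcon hpos
    nlinarith
  have hyL : y ∈ Lh := by
    have h1 := Lh.smul_mem lam⁻¹ (hALv v hvLv)
    rwa [hAv, inv_smul_smul₀ hlam.ne'] at h1
  have hAyle : ‖A y‖ ≤ lam := by simpa [hy] using hc y hyL
  have hin : ⟪A y, v⟫ = -lam := by
    rw [hskew, hAv, inner_smul_right, real_inner_self_eq_norm_mul_norm, hy]; ring
  have hAy : A y = -(lam • v) := by
    have h1 : ‖A y + lam • v‖ ^ 2 ≤ 0 := by
      rw [norm_add_sq_real, inner_smul_right, hin, norm_smul, hv,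
        Real.norm_of_nonneg hlam.le]
      nlinarith [norm_nonneg (A y)]
    have h2 : ‖A y + lam • v‖ = 0 := by
      have := sq_nonneg ‖A y + lam • v‖
      exact pow_eq_zero_iff (two_ne_zero) |>.mp (le_antisymm h1 this)
    exact eq_neg_of_add_eq_zero_left (norm_eq_zero.mp h2)
  have hnAy : ‖A y‖ = lam := by
    rw [hAy, norm_neg, norm_smul, hv, mul_one, Real.norm_of_nonneg hlam.le]
  refine ⟨hAy, ⟨hyL, ?_⟩, ?_, ?_⟩
  · intro z hz hz1
    rw [hnAy]
    simpa [hz1] using hc z hz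
  · intro w _ hwv
    rw [hskew, hAy, inner_neg_right, inner_smul_right, hwv]; simp
  · intro z _ hzy
    rw [hskew, hAv, inner_smul_right, hzy]; simp
end

section
/- Let E be a finite-dimensional real inner product space, A: E → E a skew-adjoint linear map (⟨A x, y⟩ = −⟨x, A y⟩ for all x, y), and let V and H be orthogonal subspaces of E with A(V) ⊆ H and A(H) ⊆ V. Then V admits an orthonormal basis u₁, …, u_m and an index k with 0 ≤ k ≤ m such that: (i) u₁, …, u_k is a basis of the kernel of the restriction of A to V; (ii) ⟨A u_i, A u_j⟩ = 0 whenever i ≠ j; and (iii) for each i > k, writing λ_i = ‖A u_i‖ > 0 and y_i = A u_i / λ_i, one has A y_i = −λ_i u_i. -/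
open scoped RealInnerProductSpace

open Module

theorem exists_cut_of_lower (n : ℕ) (P : Fin n → Prop) (hP : ∀ i j, i ≤ j → P j → P i) :
    ∃ k ≤ n, ∀ i : Fin n, P i ↔ (i : ℕ) < k := by
  classical
  have hex : ∃ k : ℕ, ∀ i : Fin n, k ≤ (i : ℕ) → ¬ P i :=
    ⟨n, fun i hi => absurd i.2 (by omega)⟩
  refine ⟨Nat.find hex, Nat.find_min' hex fun i hi => absurd i.2 (by omega), fun i => ⟨?_, ?_⟩⟩
  · intro h
    by_contra hc
    exact Nat.find_spec hex i (by omega) h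
  · intro h
    have := Nat.find_min hex h
    push Not at this
    obtain ⟨j, hij, hj⟩ := this
    exact hP i j hij hj

/-- Existence of an adapted orthonormal basis for a skew-adjoint endomorphism `A`
exchanging two orthogonal subspaces `V` and `H` (the basis `u₁, …, u_m` of `V`
constructed in the appendix):  `u₁, …, u_k` is an orthonormal basis of `ker(A|_V)`,
the images `A uᵢ` are pairwise orthogonal, and for `i > k`, setting `λᵢ = ‖A uᵢ‖ > 0`
and `yᵢ = A uᵢ / λᵢ`, one has `A yᵢ = -λᵢ uᵢ` (equivalently `A (A uᵢ) = -λᵢ² uᵢ`). -/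
theorem exists_adapted_orthonormal_basis_of_skew
    {E : Type*} [NormedAddCommGroup E] [InnerProductSpace ℝ E] [FiniteDimensional ℝ E]
    (A : E →ₗ[ℝ] E) (hskew : ∀ x y : E, ⟪A x, y⟫ = -⟪x, A y⟫)
    (V H : Submodule ℝ E) (hVH : ∀ x ∈ V, ∀ y ∈ H, ⟪x, y⟫ = 0)
    (hAV : ∀ x ∈ V, A x ∈ H) (hAH : ∀ y ∈ H, A y ∈ V) :
    ∃ (u : Fin (finrank ℝ V) → E) (k : ℕ),
      k ≤ finrank ℝ V ∧
      (∀ i, u i ∈ V) ∧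
      Orthonormal ℝ u ∧
      Submodule.span ℝ (Set.range u) = V ∧
      (∀ i : Fin (finrank ℝ V), A (u i) = 0 ↔ (i : ℕ) < k) ∧
      (∀ x ∈ V, A x = 0 →
        x ∈ Submodule.span ℝ (u '' {i : Fin (finrank ℝ V) | (i : ℕ) < k})) ∧
      (∀ i j : Fin (finrank ℝ V), i ≠ j → ⟪A (u i), A (u j)⟫ = 0) ∧
      (∀ i : Fin (finrank ℝ V), k ≤ (i : ℕ) → A (A (u i)) = -(‖A (u i)‖ ^ 2) • u i) := by
  have hT0 : ∀ x ∈ V, (A ∘ₗ A) x ∈ V := fun x hx => hAH _ (hAV x hx)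
  let T : V →ₗ[ℝ] V := (A ∘ₗ A).restrict hT0
  have hTa : ∀ x : V, ((T x : V) : E) = A (A x) := fun x => rfl
  have hT : T.IsSymmetric := by
    intro x y
    rw [Submodule.coe_inner, Submodule.coe_inner, hTa, hTa, hskew, hskew, neg_neg]
  let b := hT.eigenvectorBasis rfl
  let μ := hT.eigenvalues rfl
  have hb : ∀ i, A (A (b i)) = μ i • (b i : E) := by
    intro i
    have := congrArg (Subtype.val) (hT.apply_eigenvectorBasis rfl i)
    exact this
  have hon : Orthonormal ℝ (fun i => (b i : E)) :=
    b.orthonormal.comp_linearIsometry V.subtypeₗᵢ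
  have hin : ∀ i j, ⟪A (b i), A (b j)⟫ = -(μ j * ⟪(b i : E), (b j : E)⟫) := by
    intro i j
    rw [hskew, hb, inner_smul_right]
  have hmu : ∀ i, μ i = -(‖A (b i)‖ ^ 2) := by
    intro i
    have h := hin i i
    rw [real_inner_self_eq_norm_sq, real_inner_self_eq_norm_sq, hon.1 i] at h
    linarith
  have hz : ∀ i, A (b i) = 0 ↔ μ i = 0 := by
    intro i
    rw [hmu]
    simp
  obtain ⟨k, hk, hk'⟩ := exists_cut_of_lower _ (fun i => A (b i) = 0) (by
    intro i j hij hj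
    rw [hz] at hj ⊢
    have h1 : μ j ≤ μ i := hT.eigenvalues_antitone rfl hij
    have h2 := hmu i
    nlinarith [sq_nonneg ‖A (b i)‖])
  refine ⟨fun i => (b i : E), k, hk, fun i => (b i).2, hon, ?_, hk', ?_, ?_, ?_⟩
  · have h := b.toBasis.span_eq
    have h2 := congrArg (Submodule.map V.subtype) h
    rw [Submodule.map_span, ← Set.range_comp, Submodule.map_top, Submodule.range_subtype] at h2
    convert h2 using 3
    ext i
    simp
  · intro x hx hAx
    have h := congrArg (Subtype.val) (b.sum_repr' ⟨x, hx⟩)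
    simp only [Submodule.coe_sum, Submodule.coe_smul, Submodule.coe_inner] at h
    rw [← h]
    refine Submodule.sum_mem _ fun i _ => ?_
    by_cases hi : (i : ℕ) < k
    · exact Submodule.smul_mem _ _ (Submodule.subset_span ⟨i, hi, rfl⟩)
    · have hne : μ i ≠ 0 := fun h0 => hi ((hk' i).1 ((hz i).2 h0))
      have h3 : μ i * ⟪(b i : E), x⟫ = 0 := by
        rw [← real_inner_smul_left, ← hb, hskew, hAx, inner_zero_right, neg_zero]
      have h4 := (mul_eq_zero.1 h3).resolve_left hne
      rw [h4, zero_smul]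
      exact Submodule.zero_mem _
  · intro i j hij
    have h0 : ⟪(b i : E), (b j : E)⟫ = 0 := hon.2 hij
    rw [hin, h0, mul_zero, neg_zero]
  · intro i _
    rw [hb, hmu]
end
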